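/- arXiv:solv-int/9905001 — 3 statements merged into one kernel-verified Lean document; each statement's English description precedes it below -/
import Mathlib

section
/- Let u : ℝ → ℝ be smooth and let L be the operator on smooth functions f : ℝ → ℝ given by (Lf)(x) = f''(x) + u(x)·f(x). For a nonnegative integer m define the operator X_m on smooth functions by (X_m f)(x) = (−1)^m · Σ_{k=0}^{m} (−1)^k · C(m, k) · (L^k g_k)(x), where g_k denotes the 2(m−k)-th derivative of f and C(m, k) is a binomial coefficient. Then X_m is a differential operator of order at most m, in the following sense: for any point x₀ ∈ ℝ and any two smooth functions f, g : ℝ → ℝ whose derivatives of all orders i with 0 ≤ i ≤ m agree at x₀, one has (X_m f)(x₀) = (X_m g)(x₀). -/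
section AgmonKannai

theorem ak_binom {R : Type*} [Ring R] (P Q : R) (m : ℕ) :
    (∑ k ∈ Finset.range (m + 2), (-1 : R) ^ k * ((m + 1).choose k : R) * (P ^ k * Q ^ (m + 1 - k)))
     = (∑ k ∈ Finset.range (m + 1), (-1 : R) ^ k * (m.choose k : R) * (P ^ k * Q ^ (m - k))) * Q
      - P * ∑ k ∈ Finset.range (m + 1), (-1 : R) ^ k * (m.choose k : R) * (P ^ k * Q ^ (m - k)) := by
  have key : ∀ n : ℕ, (∑ k ∈ Finset.range (n + 1),
      (-1 : R) ^ k * (n.choose k : R) * (P ^ k * Q ^ (n - k)))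
      = ((LinearMap.mulLeft ℤ (-P) + LinearMap.mulRight ℤ Q : Module.End ℤ R) ^ n) 1 := by
    intro n
    have hc : Commute (LinearMap.mulLeft ℤ (-P)) (LinearMap.mulRight ℤ Q) :=
      LinearMap.commute_mulLeft_right (R := ℤ) (-P) Q
    rw [hc.add_pow, LinearMap.sum_apply]
    refine Finset.sum_congr rfl fun k _ => ?_
    rw [Module.End.mul_apply, Module.End.mul_apply, Module.End.natCast_apply,
      LinearMap.pow_mulLeft, LinearMap.pow_mulRight, LinearMap.mulLeft_apply,
      LinearMap.mulRight_apply, neg_pow P, nsmul_eq_mul]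
    have h1 := (Nat.cast_commute (n.choose k) (P ^ k)).eq
    simp only [mul_one, mul_assoc]
    rw [← mul_assoc (P ^ k) (n.choose k : R), ← h1, mul_assoc]
  have h := key (m + 1)
  rw [h, key m, pow_succ', Module.End.mul_apply]
  simp only [LinearMap.add_apply, LinearMap.mulLeft_apply, LinearMap.mulRight_apply]
  rw [neg_mul]; abel

theorem ak_order {A : Type*} [CommRing A] [Algebra ℝ A] (D U : Module.End ℝ A) (v : A)
    (hD : ∀ a b, D (a * b) = D a * b + a * D b) (hU : ∀ a, U a = v * a) (m : ℕ) :
    ∃ a : ℕ → A, ∀ f : A,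
      (∑ k ∈ Finset.range (m + 1), (-1 : Module.End ℝ A) ^ k * (m.choose k : Module.End ℝ A) *
        ((D ^ 2 + U) ^ k * (D ^ 2) ^ (m - k))) f
      = ∑ i ∈ Finset.range (m + 1), a i * (D ^ i) f := by
  induction m with
  | zero => exact ⟨fun _ => 1, fun f => by simp⟩
  | succ m ih =>
    obtain ⟨a, ha⟩ := ih
    refine ⟨fun i => (if i < m + 1 then -(D (D (a i)) + v * a i) else 0) +
      (if i = 0 then 0 else -2 * D (a (i - 1))), fun f => ?_⟩
    rw [ak_binom, LinearMap.sub_apply, Module.End.mul_apply, Module.End.mul_apply, ha, ha]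
    simp only [add_mul, Finset.sum_add_distrib]
    rw [Finset.sum_range_succ (n := m + 1), Finset.sum_range_succ' (n := m + 1)]
    simp only [lt_irrefl, if_false, if_true, zero_mul, add_zero, Nat.succ_ne_zero,
      Nat.add_sub_cancel]
    rw [Finset.sum_congr rfl (fun i hi => by rw [if_pos (Finset.mem_range.1 hi)] :
      ∀ i ∈ Finset.range (m + 1), (if i < m + 1 then -(D (D (a i)) + v * a i) else 0) * (D ^ i) f
        = -(D (D (a i)) + v * a i) * (D ^ i) f)]
    rw [map_sum, ← Finset.sum_sub_distrib, ← Finset.sum_add_distrib]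
    refine Finset.sum_congr rfl fun i _ => ?_
    have e1 : (D ^ i) ((D ^ 2) f) = D (D ((D ^ i) f)) := by
      rw [← Module.End.mul_apply, ← pow_add, add_comm, pow_add, pow_two]; rfl
    have e2 : (D ^ (i + 1)) f = D ((D ^ i) f) := by
      rw [pow_succ']; rfl
    have e3 : ∀ b, (D ^ 2) b = D (D b) := fun b => by rw [pow_two]; rfl
    rw [e1, e2, LinearMap.add_apply, hU, e3, hD, map_add, hD, hD]
    ring

/-- The algebra of smooth real functions. -/
def akSmooth : Subalgebra ℝ (ℝ → ℝ) where
  carrier := {f | ContDiff ℝ (⊤ : ℕ∞) f}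
  mul_mem' := fun {a b} (ha : ContDiff ℝ (⊤ : ℕ∞) a) (hb : ContDiff ℝ (⊤ : ℕ∞) b) => ContDiff.mul ha hb
  add_mem' := fun {a b} (ha : ContDiff ℝ (⊤ : ℕ∞) a) (hb : ContDiff ℝ (⊤ : ℕ∞) b) => ContDiff.add ha hb
  algebraMap_mem' := fun r => by
    show ContDiff ℝ (⊤ : ℕ∞) (fun _ : ℝ => r)
    exact contDiff_const

theorem akSmooth_diff (f : akSmooth) : Differentiable ℝ (f : ℝ → ℝ) :=
  ContDiff.differentiable (n := (⊤ : ℕ∞)) f.2 (by simp)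

/-- Differentiation on smooth functions. -/
noncomputable def akD : Module.End ℝ akSmooth where
  toFun f := ⟨deriv (f : ℝ → ℝ), (contDiff_infty_iff_deriv.1 f.2).2⟩
  map_add' f g := by
    ext x
    exact deriv_add (akSmooth_diff f x) (akSmooth_diff g x)
  map_smul' c f := by
    ext x
    exact deriv_const_smul c (akSmooth_diff f x)

theorem akD_pow (n : ℕ) (f : akSmooth) :
    (((akD ^ n) f : akSmooth) : ℝ → ℝ) = iteratedDeriv n (f : ℝ → ℝ) := by
  induction n with
  | zero => simp
  | succ n ih => rw [pow_succ', Module.End.mul_apply, iteratedDeriv_succ, ← ih]; rfl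

end AgmonKannai

open Finset

/-- The Agmon–Kannai coefficient operators
`X_m = Σ_{k=0}^m (−1)^k C(m,k) H^k H₀^{m−k}` (with `H = −L`, `H₀ = −d²/dx²`),
i.e. `(X_m f)(x) = (−1)^m Σ_{k=0}^m (−1)^k C(m,k) (L^k f^(2(m−k)))(x)`,
are differential operators of order at most `m`: if all derivatives of `f` and `g`
of order `≤ m` agree at `x₀`, then `(X_m f)(x₀) = (X_m g)(x₀)`. -/
theorem agmonKannai_operator_order_le (u : ℝ → ℝ) (hu : ContDiff ℝ (⊤ : ℕ∞) u)
    (L : (ℝ → ℝ) → (ℝ → ℝ))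
    (hL : ∀ f x, L f x = iteratedDeriv 2 f x + u x * f x)
    (m : ℕ) (X : (ℝ → ℝ) → (ℝ → ℝ))
    (hX : ∀ f x, X f x = (-1 : ℝ) ^ m * ∑ k ∈ Finset.range (m + 1),
        (-1 : ℝ) ^ k * (m.choose k : ℝ) * (L^[k] (iteratedDeriv (2 * (m - k)) f)) x)
    (x₀ : ℝ) (f g : ℝ → ℝ)
    (hf : ContDiff ℝ (⊤ : ℕ∞) f) (hg : ContDiff ℝ (⊤ : ℕ∞) g)
    (hfg : ∀ i ≤ m, iteratedDeriv i f x₀ = iteratedDeriv i g x₀) :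
    X f x₀ = X g x₀ := by
  set v : akSmooth := ⟨u, hu⟩ with hv
  set U : Module.End ℝ akSmooth := LinearMap.mulLeft ℝ v with hUdef
  have hLop : ∀ h : akSmooth, L (h : ℝ → ℝ) = (((akD ^ 2 + U) h : akSmooth) : ℝ → ℝ) := by
    intro h
    funext x
    rw [hL, ← akD_pow]
    rfl
  have hLk : ∀ (k : ℕ) (h : akSmooth),
      L^[k] (h : ℝ → ℝ) = ((((akD ^ 2 + U) ^ k) h : akSmooth) : ℝ → ℝ) := by
    intro k h
    induction k with
    | zero => simp
    | succ k ih => rw [Function.iterate_succ_apply', ih, hLop, pow_succ' (akD ^ 2 + U), Module.End.mul_apply]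
  obtain ⟨a, ha⟩ := ak_order akD U v
    (fun a b => by
      ext x
      exact deriv_mul (akSmooth_diff a x) (akSmooth_diff b x)) (fun _ => rfl) m
  have main : ∀ h : akSmooth, X (h : ℝ → ℝ) x₀ = (-1 : ℝ) ^ m *
      ∑ i ∈ Finset.range (m + 1), (a i : ℝ → ℝ) x₀ * iteratedDeriv i (h : ℝ → ℝ) x₀ := by
    intro h
    rw [hX]
    congr 1
    have h1 := congrArg (fun w : akSmooth => (w : ℝ → ℝ) x₀) (ha h)
    simp only [LinearMap.sum_apply, AddSubmonoidClass.coe_finsetSum, Finset.sum_apply] at h1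
    refine Eq.trans ?_ (h1.trans ?_)
    · refine Finset.sum_congr rfl fun k _ => ?_
      rw [← akD_pow, hLk, pow_mul]
      have hs : ∀ w : akSmooth, ((((-1 : Module.End ℝ akSmooth) ^ k *
          (m.choose k : Module.End ℝ akSmooth)) w : akSmooth) : ℝ → ℝ) x₀
          = (-1 : ℝ) ^ k * (m.choose k : ℝ) * (w : ℝ → ℝ) x₀ := by
        intro w
        have : ((-1 : Module.End ℝ akSmooth) ^ k * (m.choose k : Module.End ℝ akSmooth))
            = algebraMap ℝ (Module.End ℝ akSmooth) ((-1 : ℝ) ^ k * (m.choose k : ℝ)) := by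
          simp
        rw [this, Module.algebraMap_end_apply]
        rfl
      rw [Module.End.mul_apply, hs, Module.End.mul_apply]
    · refine Finset.sum_congr rfl fun k _ => ?_
      rw [← akD_pow]
      rfl
  have mf := main ⟨f, hf⟩
  have mg := main ⟨g, hg⟩
  simp only at mf mg
  rw [mf, mg]
  congr 1
  refine Finset.sum_congr rfl fun i hi => ?_
  rw [hfg i (Nat.lt_succ_iff.1 (Finset.mem_range.1 hi))]
end

section
/- Let u : ℝ → ℝ be smooth, let L be the operator on smooth functions f : ℝ → ℝ given by (Lf)(x) = f''(x) + u(x)·f(x), and for integers k ≥ n ≥ 1 let P_{k,n}(u, x₀) denote the value at x₀ of L^k applied to x ↦ (x − x₀)^(2k−2n). Define G_n(u, x₀) = Σ_{m=n}^{2n} Σ_{k=n}^{m} [ (−1)^(n+k) · C(m,k) · C(m,n) · C(2m,m) / ( 2^(2m−2n+1) · C(2m,2n) · (2k−2n)! ) ] · P_{k,n}(u, x₀). Then for every x₀ ∈ ℝ, G_2(u, x₀) = u''(x₀) + 3·u(x₀)². -/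
open Finset

/-- `P_{k,n}(u, x₀) := (L^k [(· − x₀)^(2k−2n)])(x₀)`, where `L = d²/dx² + u`. -/
noncomputable def Pkn (u : ℝ → ℝ) (k n : ℕ) (x₀ : ℝ) : ℝ :=
  ((fun f : ℝ → ℝ => fun x => iteratedDeriv 2 f x + u x * f x)^[k]
      (fun x => (x - x₀) ^ (2 * k - 2 * n))) x₀

/-- The `n`-th KdV hierarchy polynomial evaluated at `u` and its derivatives at `x₀`,
as given by the closed formula of Theorem 1:
`G_n(u, x₀) = Σ_{m=n}^{2n} Σ_{k=n}^{m} (−1)^(n+k) C(m,k) C(m,n) C(2m,m) /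
(2^(2m−2n+1) C(2m,2n) (2k−2n)!) · P_{k,n}(u, x₀)`. -/
noncomputable def kdvG (u : ℝ → ℝ) (n : ℕ) (x₀ : ℝ) : ℝ :=
  ∑ m ∈ Finset.Icc n (2 * n), ∑ k ∈ Finset.Icc n m,
    ((-1 : ℝ) ^ (n + k) * (m.choose k : ℝ) * (m.choose n : ℝ) *
        ((2 * m).choose m : ℝ)) /
      (2 ^ (2 * m - 2 * n + 1) * ((2 * m).choose (2 * n) : ℝ) *
        ((2 * k - 2 * n).factorial : ℝ)) * Pkn u k n x₀

lemma kdv_step_smooth (u : ℝ → ℝ) (hu : ContDiff ℝ (⊤ : ℕ∞) u) (f : ℝ → ℝ)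
    (hf : ContDiff ℝ (⊤ : ℕ∞) f) :
    ContDiff ℝ (⊤ : ℕ∞) (fun x => iteratedDeriv 2 f x + u x * f x) := by
  have h2 : ContDiff ℝ (⊤ : ℕ∞) (iteratedDeriv 2 f) := by
    rw [iteratedDeriv_eq_iterate]
    exact hf.iterate_deriv 2
  exact h2.add (hu.mul hf)

lemma kdv_step_jet (u : ℝ → ℝ) (hu : ContDiff ℝ (⊤ : ℕ∞) u) (f : ℝ → ℝ)
    (hf : ContDiff ℝ (⊤ : ℕ∞) f) (n : ℕ) (x : ℝ) :
    iteratedDeriv n (fun x => iteratedDeriv 2 f x + u x * f x) x =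
      iteratedDeriv (n + 2) f x + ∑ i ∈ Finset.range (n + 1),
        (n.choose i : ℝ) * iteratedDeriv i u x * iteratedDeriv (n - i) f x := by
  have h2 : ContDiff ℝ (⊤ : ℕ∞) (iteratedDeriv 2 f) := by
    rw [iteratedDeriv_eq_iterate]
    exact hf.iterate_deriv 2
  have le : (n : WithTop ℕ∞) ≤ ((⊤ : ℕ∞) : WithTop ℕ∞) := by exact_mod_cast le_top
  rw [iteratedDeriv_fun_add (h2.of_le le).contDiffAt ((hu.mul hf).of_le le).contDiffAt,
    iteratedDeriv_fun_mul (hu.of_le le).contDiffAt (hf.of_le le).contDiffAt]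
  congr 1
  simp only [iteratedDeriv_eq_iterate, ← Function.iterate_add_apply]

lemma kdv_pow_jet (x₀ : ℝ) (m j : ℕ) :
    iteratedDeriv j (fun x : ℝ => (x - x₀) ^ m) x₀ = m.descFactorial j * 0 ^ (m - j) := by
  rw [iteratedDeriv_comp_sub_const j (fun x : ℝ => x ^ m) x₀]
  simp

/-- The second KdV polynomial: `G_2[u] = u'' + 3u²`. -/
theorem kdvG_two (u : ℝ → ℝ) (hu : ContDiff ℝ (⊤ : ℕ∞) u) (x₀ : ℝ) :
    kdvG u 2 x₀ = iteratedDeriv 2 u x₀ + 3 * u x₀ ^ 2 := by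
  obtain ⟨T, hT⟩ : ∃ T : (ℝ → ℝ) → (ℝ → ℝ),
      T = (fun f : ℝ → ℝ => fun x => iteratedDeriv 2 f x + u x * f x) := ⟨_, rfl⟩
  have hs : ∀ f, ContDiff ℝ (⊤ : ℕ∞) f → ContDiff ℝ (⊤ : ℕ∞) (T f) := by
    intro f hf
    rw [hT]
    exact kdv_step_smooth u hu f hf
  have hj : ∀ f, ContDiff ℝ (⊤ : ℕ∞) f → ∀ n, iteratedDeriv n (T f) x₀ =
      iteratedDeriv (n + 2) f x₀ + ∑ i ∈ Finset.range (n + 1),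
        (n.choose i : ℝ) * iteratedDeriv i u x₀ * iteratedDeriv (n - i) f x₀ := by
    intro f hf n
    rw [hT]
    exact kdv_step_jet u hu f hf n x₀
  have hp : ∀ m : ℕ, ContDiff ℝ (⊤ : ℕ∞) (fun x : ℝ => (x - x₀) ^ m) := fun m => by fun_prop
  have h0 : ∀ f, ContDiff ℝ (⊤ : ℕ∞) f → T f x₀ = iteratedDeriv 2 f x₀ + u x₀ * f x₀ := by
    intro f _
    rw [hT]
  have e2 : Pkn u 2 2 x₀ = iteratedDeriv 2 u x₀ + u x₀ ^ 2 := by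
    unfold Pkn
    rw [← hT]
    generalize hg : (fun x : ℝ => (x - x₀) ^ (2 * 2 - 2 * 2)) = g
    have g0 : ContDiff ℝ (⊤ : ℕ∞) g := hg ▸ hp _
    have gj : ∀ j, iteratedDeriv j g x₀ = _ := fun j => hg ▸ kdv_pow_jet x₀ _ j
    have g1 := hs _ g0
    show T (T g) x₀ = _
    rw [← iteratedDeriv_zero (f := T (T g)), hj _ g1]
    simp only [hj _ g0, gj, Finset.sum_range_succ, Finset.sum_range_zero]
    norm_num [Nat.descFactorial, Nat.choose, iteratedDeriv_zero]
    try ring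
  have e3 : Pkn u 3 2 x₀ = 14 * iteratedDeriv 2 u x₀ + 6 * u x₀ ^ 2 := by
    unfold Pkn
    rw [← hT]
    generalize hg : (fun x : ℝ => (x - x₀) ^ (2 * 3 - 2 * 2)) = g
    have g0 : ContDiff ℝ (⊤ : ℕ∞) g := hg ▸ hp _
    have gj : ∀ j, iteratedDeriv j g x₀ = _ := fun j => hg ▸ kdv_pow_jet x₀ _ j
    have g1 := hs _ g0
    have g2 := hs _ g1
    show T (T (T g)) x₀ = _
    rw [← iteratedDeriv_zero (f := T (T (T g))), hj _ g2]
    simp only [hj _ g1, hj _ g0, gj, Finset.sum_range_succ, Finset.sum_range_zero]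
    norm_num [Nat.descFactorial, Nat.choose, iteratedDeriv_zero]
    try ring
  have e4 : Pkn u 4 2 x₀ = 528 * iteratedDeriv 2 u x₀ + 144 * u x₀ ^ 2 := by
    unfold Pkn
    rw [← hT]
    generalize hg : (fun x : ℝ => (x - x₀) ^ (2 * 4 - 2 * 2)) = g
    have g0 : ContDiff ℝ (⊤ : ℕ∞) g := hg ▸ hp _
    have gj : ∀ j, iteratedDeriv j g x₀ = _ := fun j => hg ▸ kdv_pow_jet x₀ _ j
    have g1 := hs _ g0
    have g2 := hs _ g1
    have g3 := hs _ g2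
    show T (T (T (T g))) x₀ = _
    rw [← iteratedDeriv_zero (f := T (T (T (T g)))), hj _ g3]
    simp only [hj _ g2, hj _ g1, hj _ g0, gj, Finset.sum_range_succ, Finset.sum_range_zero]
    norm_num [Nat.descFactorial, Nat.choose, iteratedDeriv_zero]
    try ring
  have i2 : Finset.Icc 2 (2 * 2) = {2, 3, 4} := by decide
  have i3 : Finset.Icc 2 3 = {2, 3} := by decide
  have i4 : Finset.Icc 2 4 = {2, 3, 4} := by decide
  unfold kdvG
  rw [i2]
  simp [i3, i4, e2, e3, e4, Nat.choose, Nat.factorial]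
  ring
end

section
/- Let u : ℝ → ℝ be smooth, let L be the operator on smooth functions f : ℝ → ℝ given by (Lf)(x) = f''(x) + u(x)·f(x), and for integers k ≥ n ≥ 1 let P_{k,n}(u, x₀) denote the value at x₀ of L^k applied to x ↦ (x − x₀)^(2k−2n). Define G_n(u, x₀) = Σ_{m=n}^{2n} Σ_{k=n}^{m} [ (−1)^(n+k) · C(m,k) · C(m,n) · C(2m,m) / ( 2^(2m−2n+1) · C(2m,2n) · (2k−2n)! ) ] · P_{k,n}(u, x₀). Then for every x₀ ∈ ℝ, G_3(u, x₀) = u''''(x₀) + 10·u(x₀)·u''(x₀) + 5·(u'(x₀))² + 10·u(x₀)³. -/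
open Finset

/-- The action of `L` on the sequence of derivatives at a point. -/
noncomputable def jetL (v a : ℕ → ℝ) : ℕ → ℝ := fun j =>
  a (j + 2) + ∑ i ∈ Finset.range (j + 1), (j.choose i : ℝ) * v i * a (j - i)

lemma contDiff_L (u f : ℝ → ℝ) (hu : ContDiff ℝ (⊤ : ℕ∞) u) (hf : ContDiff ℝ (⊤ : ℕ∞) f) :
    ContDiff ℝ (⊤ : ℕ∞) (fun x => iteratedDeriv 2 f x + u x * f x) := by
  have h2 : ContDiff ℝ (⊤ : ℕ∞) (iteratedDeriv 2 f) := by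
    rw [iteratedDeriv_eq_iterate]
    exact ContDiff.iterate_deriv 2 hf
  exact h2.add (hu.mul hf)

lemma jet_L (u f : ℝ → ℝ) (hu : ContDiff ℝ (⊤ : ℕ∞) u) (hf : ContDiff ℝ (⊤ : ℕ∞) f) (x₀ : ℝ) :
    (fun j => iteratedDeriv j (fun x => iteratedDeriv 2 f x + u x * f x) x₀) =
      jetL (fun j => iteratedDeriv j u x₀) (fun j => iteratedDeriv j f x₀) := by
  funext j
  have h2 : ContDiff ℝ (⊤ : ℕ∞) (iteratedDeriv 2 f) := by
    rw [iteratedDeriv_eq_iterate]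
    exact ContDiff.iterate_deriv 2 hf
  have hle : (j : WithTop ℕ∞) ≤ ((⊤ : ℕ∞) : WithTop ℕ∞) := by exact_mod_cast le_top
  have hm : ContDiff ℝ (⊤ : ℕ∞) (u * f) := hu.mul hf
  have e : (fun x => iteratedDeriv 2 f x + u x * f x) = iteratedDeriv 2 f + u * f := rfl
  have e2 : iteratedDeriv j (iteratedDeriv 2 f) = iteratedDeriv (j + 2) f := by
    rw [iteratedDeriv_eq_iterate, iteratedDeriv_eq_iterate, iteratedDeriv_eq_iterate,
      Function.iterate_add_apply]
  rw [e, iteratedDeriv_add ((h2.of_le hle).contDiffAt) ((hm.of_le hle).contDiffAt),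
    iteratedDeriv_mul ((hu.of_le hle).contDiffAt) ((hf.of_le hle).contDiffAt), e2]
  rfl

lemma jet_iterate (u : ℝ → ℝ) (hu : ContDiff ℝ (⊤ : ℕ∞) u) (x₀ : ℝ) (k : ℕ) :
    ∀ f : ℝ → ℝ, ContDiff ℝ (⊤ : ℕ∞) f →
    ((fun f : ℝ → ℝ => fun x => iteratedDeriv 2 f x + u x * f x)^[k] f) x₀ =
      ((jetL (fun j => iteratedDeriv j u x₀))^[k] (fun j => iteratedDeriv j f x₀)) 0 := by
  induction k with
  | zero => intro f _; simp
  | succ k ih =>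
    intro f hf
    rw [Function.iterate_succ_apply, Function.iterate_succ_apply, ih _ (contDiff_L u f hu hf),
      jet_L u f hu hf]

lemma jet_pow (x₀ : ℝ) (m : ℕ) :
    (fun j => iteratedDeriv j (fun x : ℝ => (x - x₀) ^ m) x₀) =
      fun j => if j = m then (m.factorial : ℝ) else 0 := by
  funext j
  rw [iteratedDeriv_comp_sub_const (𝕜 := ℝ) (f := fun x : ℝ => x ^ m)]
  simp only [sub_self]
  simpa using iteratedDeriv_fun_pow_zero (𝕜 := ℝ) (n := j) (m := m)

lemma Pkn_eq (u : ℝ → ℝ) (hu : ContDiff ℝ (⊤ : ℕ∞) u) (x₀ : ℝ) (k n : ℕ) :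
    Pkn u k n x₀ = ((jetL (fun j => iteratedDeriv j u x₀))^[k]
      (fun j => if j = 2 * k - 2 * n then ((2 * k - 2 * n).factorial : ℝ) else 0)) 0 := by
  rw [Pkn, jet_iterate u hu x₀ k _ (by fun_prop), jet_pow]

set_option maxHeartbeats 4000000 in
lemma jet_val_3 (v : ℕ → ℝ) :
    ((jetL v)^[3] (fun j => if j = 0 then ((0 : ℕ).factorial : ℝ) else 0)) 0 =
      1 * v 4 + 3 * v 0 * v 2 + 2 * v 1 * v 1 + 1 * v 0 * v 0 * v 0 := by
  simp [jetL, Finset.sum_range_succ, Nat.choose, Nat.factorial]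
  try ring

set_option maxHeartbeats 4000000 in
lemma jet_val_4 (v : ℕ → ℝ) :
    ((jetL v)^[4] (fun j => if j = 2 then ((2 : ℕ).factorial : ℝ) else 0)) 0 =
      32 * v 4 + 56 * v 0 * v 2 + 40 * v 1 * v 1 + 8 * v 0 * v 0 * v 0 := by
  simp [jetL, Finset.sum_range_succ, Nat.choose, Nat.factorial]
  try ring

set_option maxHeartbeats 4000000 in
lemma jet_val_5 (v : ℕ → ℝ) :
    ((jetL v)^[5] (fun j => if j = 4 then ((4 : ℕ).factorial : ℝ) else 0)) 0 =
      2064 * v 4 + 2640 * v 0 * v 2 + 1920 * v 1 * v 1 + 240 * v 0 * v 0 * v 0 := by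
  simp [jetL, Finset.sum_range_succ, Nat.choose, Nat.factorial]
  try ring

set_option maxHeartbeats 4000000 in
lemma jet_val_6 (v : ℕ → ℝ) :
    ((jetL v)^[6] (fun j => if j = 6 then ((6 : ℕ).factorial : ℝ) else 0)) 0 =
      213120 * v 4 + 216000 * v 0 * v 2 + 158400 * v 1 * v 1 + 14400 * v 0 * v 0 * v 0 := by
  simp [jetL, Finset.sum_range_succ, Nat.choose, Nat.factorial]
  try ring

/-- The third KdV polynomial: `G_3[u] = u'''' + 10 u u'' + 5 (u')² + 10 u³`. -/
theorem kdvG_three (u : ℝ → ℝ) (hu : ContDiff ℝ (⊤ : ℕ∞) u) (x₀ : ℝ) :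
    kdvG u 3 x₀ = iteratedDeriv 4 u x₀ + 10 * u x₀ * iteratedDeriv 2 u x₀ +
      5 * (deriv u x₀) ^ 2 + 10 * u x₀ ^ 3 := by
  have p3 := (Pkn_eq u hu x₀ 3 3).trans (jet_val_3 _)
  have p4 := (Pkn_eq u hu x₀ 4 3).trans (jet_val_4 _)
  have p5 := (Pkn_eq u hu x₀ 5 3).trans (jet_val_5 _)
  have p6 := (Pkn_eq u hu x₀ 6 3).trans (jet_val_6 _)
  have s3 : Finset.Icc 3 3 = {3} := by decide
  have s4 : Finset.Icc 3 4 = {3, 4} := by decide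
  have s5 : Finset.Icc 3 5 = {3, 4, 5} := by decide
  have s6 : Finset.Icc 3 6 = {3, 4, 5, 6} := by decide
  have c0 : iteratedDeriv 0 u x₀ = u x₀ := by simp
  have c1 : iteratedDeriv 1 u x₀ = deriv u x₀ := by simp
  simp only [c0, c1] at p3 p4 p5 p6
  simp [kdvG, s3, s4, s5, s6, p3, p4, p5, p6, Nat.choose, Nat.factorial]
  ring
end
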